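/- arXiv:1401.2764 — 3 statements merged into one kernel-verified Lean document; each statement's English description precedes it below -/
import Mathlib

section
/- Let M be a finitely generated graded A-module. Then each homogeneous component M_l is a finite-dimensional F-vector space, and there exist a natural number L, an integer ν ≥ 0, and integers e_0, e_1, …, e_ν such that for every l ≥ L one has dim_F M_l = Σ_{k=0}^{ν} e_k · binomial(l, k); that is, the Hilbert function l ↦ dim_F M_l agrees for large l with a polynomial whose coefficients in the binomial basis are integers. -/
open MvPolynomial

/-- A grading on a module `M` over the polynomial algebra `A = F[Z₁,…,Zₙ]`
(realized as `MvPolynomial (Fin n) F`): an `F`-vector space decomposition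
`M = ⨁ M_l` such that `A_d • M_l ⊆ M_{d+l}` for homogeneous polynomials of
degree `d`. -/
structure PolyGrading (F : Type) [Field F] (n : ℕ) (M : Type)
    [AddCommGroup M] [Module F M] [Module (MvPolynomial (Fin n) F) M]
    [IsScalarTower F (MvPolynomial (Fin n) F) M] where
  piece : ℕ → Submodule F M
  isInternal : DirectSum.IsInternal piece
  smul_mem : ∀ (d l : ℕ) (p : MvPolynomial (Fin n) F), p.IsHomogeneous d →
    ∀ x, x ∈ piece l → p • x ∈ piece (d + l)

/-!
The idea is to work with pairs `N' ≤ N` of homogeneous submodules and a finite set `s` of variables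
such that every variable outside `s` maps `N` into `N'`, so that `N / N'` is a module over
`F[Xᵢ | i ∈ s]`, and to show by induction on `s` that `dim N_l - dim N'_l` is annihilated by the
`#s`-th forward difference for large `l`. If `s` is empty, then `N / N'` is finite-dimensional. For
a new variable `X`, the kernel `K / N'` and the cokernel `N / P` of multiplication by `X` on
`N / N'`, where `K = N ∩ X⁻¹ N'` and `P = N' + X N`, are covered by the induction hypothesis, and
counting dimensions expresses the first difference for `N / N'` through them. No change of rings is
needed, since all submodules live in one Noetherian module.
-/

open Filter fwdDiff DirectSum

namespace HilbertPolynomial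

section ForwardDifference

variable {G : Type*} [AddCommGroup G]

lemma exists_eventually_eq_sum_choose {f : ℕ → G} {d : ℕ}
    (hf : ∀ᶠ l in atTop, (Δ_[1])^[d] f l = 0) :
    ∃ e : ℕ → G, ∀ᶠ l in atTop, f l = ∑ k ∈ Finset.range d, l.choose k • e k := by
  induction d generalizing f with
  | zero => exact ⟨0, by simpa using hf⟩
  | succ d ih =>
    obtain ⟨e, he⟩ := ih hf
    obtain ⟨L, hL⟩ := eventually_atTop.1 he
    let s (l : ℕ) : G := ∑ k ∈ Finset.range d, l.choose (k + 1) • e k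
    have s_succ (l : ℕ) : s (l + 1) = (∑ k ∈ Finset.range d, l.choose k • e k) + s l := by
      simp only [s, Nat.choose_succ_succ', add_smul, Finset.sum_add_distrib]
    have sub_const (l : ℕ) (hl : L ≤ l) : f l = s l + (f L - s L) := by
      induction l, hl using Nat.le_induction with
      | base => abel
      | succ l hl ih_l =>
        rw [s_succ, ← hL l hl, add_assoc, ← ih_l]
        exact (sub_add_cancel _ _).symm
    refine ⟨fun k ↦ k.casesOn (f L - s L) e, eventually_atTop.2 ⟨L, fun l hl ↦ ?_⟩⟩
    simpa [Finset.sum_range_succ'] using sub_const l hl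

lemma eventually_fwdDiff_iter_succ_eq_zero {f a b : ℕ → G} {d : ℕ}
    (h : Δ_[1] f + b = fun l ↦ a (l + 1))
    (ha : ∀ᶠ l in atTop, (Δ_[1])^[d] a l = 0) (hb : ∀ᶠ l in atTop, (Δ_[1])^[d] b l = 0) :
    ∀ᶠ l in atTop, (Δ_[1])^[d + 1] f l = 0 := by
  filter_upwards [(tendsto_add_atTop_nat 1).eventually ha, hb] with l ha_l hb_l
  have key : (Δ_[1])^[d] (Δ_[1] f) l + (Δ_[1])^[d] b l = (Δ_[1])^[d] a (l + 1) := by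
    rw [← fwdDiff_iter_comp_add, ← h, fwdDiff_iter_add, Pi.add_apply]
  rwa [ha_l, hb_l, add_zero] at key

end ForwardDifference

section LinearAlgebra

variable {F V W : Type*} [Field F] [AddCommGroup V] [Module F V] [AddCommGroup W] [Module F W]

lemma finrank_map_add_finrank_inf_ker (f : V →ₗ[F] W) (S : Submodule F V)
    [FiniteDimensional F S] :
    Module.finrank F (S.map f) + Module.finrank F (S ⊓ f.ker : Submodule F V) =
      Module.finrank F S := by
  rw [← LinearMap.finrank_range_add_finrank_ker (f.domRestrict S), LinearMap.range_domRestrict,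
    LinearMap.ker_domRestrict, (Submodule.equivSubtypeMap S _).finrank_eq,
    Submodule.map_comap_subtype]

lemma finrank_inf_comap_add_finrank_sup_map (f : V →ₗ[F] W) (S : Submodule F V)
    (T : Submodule F W) [FiniteDimensional F S] [FiniteDimensional F T] :
    Module.finrank F (S ⊓ T.comap f : Submodule F V) +
        Module.finrank F (T ⊔ S.map f : Submodule F W) =
      Module.finrank F S + Module.finrank F T := by
  have rank_nullity_S := finrank_map_add_finrank_inf_ker f S
  have rank_nullity_inf := finrank_map_add_finrank_inf_ker f (S ⊓ T.comap f)
  have sup_add_inf := Submodule.finrank_sup_add_finrank_inf_eq T (S.map f)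
  have map_inf_comap : (S ⊓ T.comap f).map f = T ⊓ S.map f :=
    SetLike.coe_injective (by simp [Set.image_inter_preimage, Set.inter_comm])
  have ker_le : f.ker ≤ T.comap f := LinearMap.ker_le_comap f
  rw [map_inf_comap, inf_assoc, inf_eq_right.2 ker_le] at rank_nullity_inf
  omega

end LinearAlgebra

section Homogeneous

variable {A M S₁ S₂ : Type*} [CommSemiring A] [AddCommMonoid M] [Module A M]
  [SetLike S₁ A] [SetLike S₂ M] [AddSubmonoidClass S₂ M]
  {𝒜 : ℕ → S₁} {ℳ : ℕ → S₂} [Decomposition ℳ] [SetLike.GradedSMul 𝒜 ℳ]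
  {N N' : Submodule A M} {d : ℕ} {a : A}

variable (ℳ) in
lemma eventually_decompose_eq_zero (x : M) : ∀ᶠ l in atTop, (decompose ℳ x l : M) = 0 := by
  rw [← Nat.cofinite_eq_atTop]
  exact DirectSum.hasFiniteSupport ℳ _

variable (ℳ) in
lemma decompose_smul_of_le (ha : a ∈ 𝒜 d) (x : M) {l : ℕ} (hl : d ≤ l) :
    (decompose ℳ (a • x) l : M) = a • (decompose ℳ x (l - d) : M) := by
  induction x using Decomposition.inductionOn ℳ with
  | zero => simp
  | add x y hx hy => simp [smul_add, hx, hy]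
  | @homogeneous j x =>
    have smul_mem : a • (x : M) ∈ ℳ (d + j) := SetLike.GradedSMul.smul_mem ha x.2
    by_cases h : j = l - d
    · obtain rfl : l = d + j := by omega
      rw [decompose_of_mem_same ℳ smul_mem, ← h, decompose_of_mem_same ℳ x.2]
    · rw [decompose_of_mem_ne ℳ smul_mem (by omega), decompose_of_mem_ne ℳ x.2 h, smul_zero]

variable (ℳ) in
lemma decompose_smul_of_lt (ha : a ∈ 𝒜 d) (x : M) {l : ℕ} (hl : l < d) :
    (decompose ℳ (a • x) l : M) = 0 := by
  induction x using Decomposition.inductionOn ℳ with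
  | zero => simp
  | add x y hx hy => simp [smul_add, hx, hy]
  | @homogeneous j x =>
    have smul_mem : a • (x : M) ∈ ℳ (d + j) := SetLike.GradedSMul.smul_mem ha x.2
    exact decompose_of_mem_ne ℳ smul_mem (by omega)

lemma isHomogeneous_sup (hN : N.IsHomogeneous ℳ) (hN' : N'.IsHomogeneous ℳ) :
    (N ⊔ N').IsHomogeneous ℳ := by
  intro l x hx
  obtain ⟨y, hy, z, hz, rfl⟩ := Submodule.mem_sup.1 hx
  rw [decompose_add]
  exact Submodule.add_mem_sup (hN l hy) (hN' l hz)

lemma isHomogeneous_inf (hN : N.IsHomogeneous ℳ) (hN' : N'.IsHomogeneous ℳ) :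
    (N ⊓ N').IsHomogeneous ℳ :=
  fun l _ hx ↦ ⟨hN l hx.1, hN' l hx.2⟩

lemma isHomogeneous_map_lsmul (hN : N.IsHomogeneous ℳ) (ha : a ∈ 𝒜 d) :
    (N.map (LinearMap.lsmul A M a)).IsHomogeneous ℳ := by
  rintro l _ ⟨x, hx, rfl⟩
  rw [LinearMap.lsmul_apply]
  obtain hl | hl := le_or_gt d l
  · rw [decompose_smul_of_le ℳ ha x hl]
    exact Submodule.mem_map_of_mem (hN _ hx)
  · rw [decompose_smul_of_lt ℳ ha x hl]
    exact zero_mem _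

lemma isHomogeneous_comap_lsmul (hN : N.IsHomogeneous ℳ) (ha : a ∈ 𝒜 d) :
    (N.comap (LinearMap.lsmul A M a)).IsHomogeneous ℳ := by
  intro l x hx
  have smul_mem := hN (d + l) hx
  rw [LinearMap.lsmul_apply, decompose_smul_of_le ℳ ha x (d.le_add_right l),
    Nat.add_sub_cancel_left] at smul_mem
  exact smul_mem

end Homogeneous

section HilbertFunction

variable {F A M : Type*} [Field F] [CommRing A] [Algebra F A] [AddCommGroup M] [Module F M]
  [Module A M] [IsScalarTower F A M]

/-- The degree `l` component `N ∩ M_l` of a submodule `N` of a graded module. -/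
def degreePart (ℳ : ℕ → Submodule F M) (N : Submodule A M) (l : ℕ) : Submodule F M :=
  N.restrictScalars F ⊓ ℳ l

/-- The function `l ↦ dim N_l - dim N'_l`, which for homogeneous `N' ≤ N` with finite-dimensional
components is the Hilbert function of `N / N'`. It is integer-valued so that its forward
differences make sense, and avoids the grading on the quotient module. -/
noncomputable def relHilbertFunction (ℳ : ℕ → Submodule F M) (N N' : Submodule A M) (l : ℕ) : ℤ :=
  Module.finrank F (degreePart ℳ N l) - Module.finrank F (degreePart ℳ N' l)

lemma relHilbertFunction_top_bot (ℳ : ℕ → Submodule F M) (l : ℕ) :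
    relHilbertFunction ℳ (⊤ : Submodule A M) ⊥ l = Module.finrank F (ℳ l) := by
  have top_part : degreePart ℳ (⊤ : Submodule A M) l = ℳ l := top_inf_eq _
  have bot_part : degreePart ℳ (⊥ : Submodule A M) l = ⊥ := bot_inf_eq _
  rw [relHilbertFunction, top_part, bot_part, finrank_bot, Nat.cast_zero, sub_zero]

variable {𝒜 : ℕ → Submodule F A} {ℳ : ℕ → Submodule F M} [SetLike.GradedSMul 𝒜 ℳ]
  {N N' : Submodule A M} {a : A} {d : ℕ}

lemma degreePart_inf_comap_lsmul (ha : a ∈ 𝒜 d) (l : ℕ) :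
    degreePart ℳ (N ⊓ N'.comap (LinearMap.lsmul A M a)) l =
      degreePart ℳ N l ⊓ (degreePart ℳ N' (d + l)).comap (Algebra.lsmul F F M a) := by
  ext x
  have smul_mem (hx : x ∈ ℳ l) : a • x ∈ ℳ (d + l) := SetLike.GradedSMul.smul_mem ha hx
  simp only [degreePart, Submodule.mem_inf, Submodule.mem_comap, Submodule.restrictScalars_mem,
    LinearMap.lsmul_apply, Algebra.lsmul_coe]
  tauto

lemma degreePart_sup_map_lsmul [Decomposition ℳ] (hN : N.IsHomogeneous ℳ)
    (hN' : N'.IsHomogeneous ℳ) (ha : a ∈ 𝒜 d) (l : ℕ) :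
    degreePart ℳ (N' ⊔ N.map (LinearMap.lsmul A M a)) (d + l) =
      degreePart ℳ N' (d + l) ⊔ (degreePart ℳ N l).map (Algebra.lsmul F F M a) := by
  apply le_antisymm
  · rintro x ⟨hx, hxl⟩
    obtain ⟨y, hy, _, ⟨z, hz, rfl⟩, rfl⟩ := Submodule.mem_sup.1 hx
    rw [← decompose_of_mem_same ℳ hxl, decompose_add, DirectSum.add_apply, Submodule.coe_add,
      LinearMap.lsmul_apply, decompose_smul_of_le ℳ ha z (d.le_add_right l),
      Nat.add_sub_cancel_left]
    exact Submodule.add_mem_sup ⟨hN' _ hy, SetLike.coe_mem _⟩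
      (Submodule.mem_map_of_mem (f := Algebra.lsmul F F M a) ⟨hN _ hz, SetLike.coe_mem _⟩)
  · refine sup_le (fun x hx ↦ ⟨Submodule.mem_sup_left hx.1, hx.2⟩) ?_
    rintro _ ⟨x, hx, rfl⟩
    exact ⟨Submodule.mem_sup_right (Submodule.mem_map_of_mem hx.1),
      SetLike.GradedSMul.smul_mem ha hx.2⟩

lemma fwdDiff_relHilbertFunction_add [Decomposition ℳ] [∀ l, FiniteDimensional F (ℳ l)]
    (hN : N.IsHomogeneous ℳ) (hN' : N'.IsHomogeneous ℳ) (ha : a ∈ 𝒜 1) :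
    Δ_[1] (relHilbertFunction ℳ N N') +
        relHilbertFunction ℳ (N ⊓ N'.comap (LinearMap.lsmul A M a)) N' =
      fun l ↦ relHilbertFunction ℳ N (N' ⊔ N.map (LinearMap.lsmul A M a)) (l + 1) := by
  ext l
  have finite (N : Submodule A M) (l : ℕ) : FiniteDimensional F (degreePart ℳ N l) :=
    Submodule.finiteDimensional_of_le inf_le_right
  have dim_count := finrank_inf_comap_add_finrank_sup_map (Algebra.lsmul F F M a)
    (degreePart ℳ N l) (degreePart ℳ N' (1 + l))
  rw [← degreePart_inf_comap_lsmul ha, ← degreePart_sup_map_lsmul hN hN' ha, add_comm 1 l]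
    at dim_count
  simp only [Pi.add_apply, fwdDiff, relHilbertFunction]
  lia

end HilbertFunction

section PolynomialRing

variable {R σ M : Type*} [CommRing R] [AddCommGroup M] [Module R M]
  [Module (MvPolynomial σ R) M] [IsScalarTower R (MvPolynomial σ R) M]

lemma smul_sub_constantCoeff_smul_mem {N' : Submodule (MvPolynomial σ R) M} {x : M}
    (hx : ∀ i, (X i : MvPolynomial σ R) • x ∈ N') (p : MvPolynomial σ R) :
    p • x - constantCoeff p • x ∈ N' := by
  induction p using MvPolynomial.induction_on with
  | C r =>
    have C_smul : (C r : MvPolynomial σ R) • x = r • x := by rw [← algebraMap_eq, algebraMap_smul]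
    rw [constantCoeff_C, C_smul, sub_self]
    exact N'.zero_mem
  | add p q hp hq =>
    rw [map_add, add_smul, add_smul, add_sub_add_comm]
    exact N'.add_mem hp hq
  | mul_X p i _ => simpa [mul_smul] using N'.smul_mem p (hx i)

variable (ℳ : ℕ → Submodule R M) [Decomposition ℳ]

lemma eventually_forall_decompose_mem {N N' : Submodule (MvPolynomial σ R) M} (hN : N.FG)
    (hN' : N'.IsHomogeneous ℳ) (hX : ∀ i, ∀ x ∈ N, (X i : MvPolynomial σ R) • x ∈ N') :
    ∀ᶠ l in atTop, ∀ x ∈ N, (decompose ℳ x l : M) ∈ N' := by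
  obtain ⟨T, rfl⟩ := hN
  have generators_vanish : ∀ᶠ l in atTop, ∀ t ∈ T, (decompose ℳ t l : M) = 0 :=
    (Finset.eventually_all T).2 fun t _ ↦ eventually_decompose_eq_zero ℳ t
  filter_upwards [generators_vanish] with l hl x hx
  induction hx using Submodule.closure_induction with
  | zero => simp
  | add x y _ _ hx hy => simpa using add_mem hx hy
  | smul_mem p t ht =>
    have mem := hN' l (smul_sub_constantCoeff_smul_mem
      (fun i ↦ hX i t (Submodule.subset_span ht)) p)
    rwa [decompose_sub, DirectSum.sub_apply, Submodule.coe_sub, decompose_smul,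
      DirectSum.smul_apply, Submodule.coe_smul, hl t ht, smul_zero, sub_zero] at mem

variable [SetLike.GradedSMul (homogeneousSubmodule σ R) ℳ]

lemma decompose_smul_eq_constantCoeff_smul {l : ℕ} {x : M} (hx : x ∈ ℳ l) (p : MvPolynomial σ R) :
    (decompose ℳ (p • x) l : M) = constantCoeff p • x := by
  have component_smul_mem (d : ℕ) : homogeneousComponent d p • x ∈ ℳ (d + l) :=
    SetLike.GradedSMul.smul_mem (homogeneousComponent_mem d p) hx
  calc (decompose ℳ (p • x) l : M)
    _ = ∑ d ∈ Finset.range (p.totalDegree + 1),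
          (decompose ℳ (homogeneousComponent d p • x) l : M) := by
      conv_lhs => rw [← sum_homogeneousComponent p, Finset.sum_smul, decompose_sum]
      rw [DFinsupp.finsetSum_apply, Submodule.coe_sum]
    _ = (decompose ℳ (homogeneousComponent 0 p • x) l : M) :=
      Finset.sum_eq_single_of_mem 0 (by simp) fun d _ hd ↦
        decompose_of_mem_ne ℳ (component_smul_mem d) (by omega)
    _ = homogeneousComponent 0 p • x :=
      decompose_of_mem_same ℳ (by simpa using component_smul_mem 0)
    _ = constantCoeff p • x := by
      rw [homogeneousComponent_zero, ← algebraMap_eq, algebraMap_smul, constantCoeff_eq]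

lemma decompose_mem_span {l : ℕ} {T : Set M} (hT : T ⊆ ℳ l) {x : M}
    (hx : x ∈ Submodule.span (MvPolynomial σ R) T) :
    (decompose ℳ x l : M) ∈ Submodule.span R T := by
  induction hx using Submodule.closure_induction with
  | zero => simp
  | add x y _ _ hx hy => simpa using add_mem hx hy
  | smul_mem p x hx =>
    rw [decompose_smul_eq_constantCoeff_smul ℳ (hT hx)]
    exact Submodule.smul_mem _ _ (Submodule.subset_span hx)

theorem isNoetherian_piece (h : IsNoetherian (MvPolynomial σ R) M) (l : ℕ) :
    IsNoetherian R (ℳ l) := by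
  refine isNoetherian_submodule.2 fun V hV ↦ ?_
  obtain ⟨T, hTV, hT⟩ := (Submodule.fg_span_iff_fg_span_finset_subset _).1
    (h.noetherian (Submodule.span (MvPolynomial σ R) (V : Set M)))
  refine ⟨T, le_antisymm (Submodule.span_le.2 hTV) fun x hx ↦ ?_⟩
  rw [← decompose_of_mem_same ℳ (hV hx)]
  exact decompose_mem_span ℳ (hTV.trans hV) (hT ▸ Submodule.subset_span hx)

end PolynomialRing

section Field

variable {F σ M : Type*} [Field F] [AddCommGroup M] [Module F M]
  [Module (MvPolynomial σ F) M] [IsScalarTower F (MvPolynomial σ F) M]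
  (ℳ : ℕ → Submodule F M) [Decomposition ℳ] {N N' : Submodule (MvPolynomial σ F) M}

lemma eventually_relHilbertFunction_eq_zero (hN : N.FG) (hN' : N'.IsHomogeneous ℳ) (hle : N' ≤ N)
    (hX : ∀ i, ∀ x ∈ N, (X i : MvPolynomial σ F) • x ∈ N') :
    ∀ᶠ l in atTop, relHilbertFunction ℳ N N' l = 0 := by
  filter_upwards [eventually_forall_decompose_mem ℳ hN hN' hX] with l hl
  have part_eq : degreePart ℳ N l = degreePart ℳ N' l :=
    le_antisymm (fun x hx ↦ ⟨decompose_of_mem_same ℳ hx.2 ▸ hl x hx.1, hx.2⟩)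
      (inf_le_inf_right _ hle)
  rw [relHilbertFunction, part_eq, sub_self]

variable [SetLike.GradedSMul (homogeneousSubmodule σ F) ℳ] [IsNoetherian (MvPolynomial σ F) M]

theorem eventually_fwdDiff_iter_relHilbertFunction_eq_zero (s : Finset σ)
    (hN : N.IsHomogeneous ℳ) (hN' : N'.IsHomogeneous ℳ) (hle : N' ≤ N)
    (hX : ∀ i ∉ s, ∀ x ∈ N, (X i : MvPolynomial σ F) • x ∈ N') :
    ∀ᶠ l in atTop, (Δ_[1])^[s.card] (relHilbertFunction ℳ N N') l = 0 := by
  classical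
  induction s using Finset.induction_on generalizing N N' with
  | empty =>
    exact eventually_relHilbertFunction_eq_zero ℳ (IsNoetherian.noetherian N) hN' hle fun i ↦
      hX i (Finset.notMem_empty i)
  | insert j s hj ih =>
    have := isNoetherian_piece ℳ ‹IsNoetherian (MvPolynomial σ F) M›
    have hXj : (X j : MvPolynomial σ F) ∈ homogeneousSubmodule σ F 1 := isHomogeneous_X F j
    let mulX := LinearMap.lsmul (MvPolynomial σ F) M (X j)
    have image_le : N.map mulX ≤ N := Submodule.map_le_iff_le_comap.2 fun x hx ↦ N.smul_mem _ hx
    have hX' (i : σ) (hi : i ∉ s) (hij : i ≠ j) : ∀ x ∈ N, (X i : MvPolynomial σ F) • x ∈ N' :=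
      hX i (by simp [hi, hij])
    have kernel := ih (N := N ⊓ N'.comap mulX) (N' := N')
      (isHomogeneous_inf hN (isHomogeneous_comap_lsmul hN' hXj)) hN'
      (le_inf hle fun x hx ↦ N'.smul_mem _ hx) fun i hi x hx ↦ by
        obtain rfl | hij := eq_or_ne i j
        · exact hx.2
        · exact hX' i hi hij x hx.1
    have cokernel := ih (N := N) (N' := N' ⊔ N.map mulX) hN
      (isHomogeneous_sup hN' (isHomogeneous_map_lsmul hN hXj))
      (sup_le hle image_le) fun i hi x hx ↦ by
        obtain rfl | hij := eq_or_ne i j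
        · exact Submodule.mem_sup_right (Submodule.mem_map_of_mem (f := mulX) hx)
        · exact Submodule.mem_sup_left (hX' i hi hij x hx)
    rw [Finset.card_insert_of_notMem hj]
    exact eventually_fwdDiff_iter_succ_eq_zero (fwdDiff_relHilbertFunction_add hN hN' hXj)
      cokernel kernel

end Field

end HilbertPolynomial

open HilbertPolynomial in
theorem stmt_1_general {F σ M : Type*} [Field F] [Fintype σ] [AddCommGroup M] [Module F M]
    [Module (MvPolynomial σ F) M] [IsScalarTower F (MvPolynomial σ F) M]
    [Module.Finite (MvPolynomial σ F) M] (ℳ : ℕ → Submodule F M) [Decomposition ℳ]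
    [SetLike.GradedSMul (homogeneousSubmodule σ F) ℳ] :
    (∀ l, FiniteDimensional F (ℳ l)) ∧
    ∃ e : ℕ → ℤ, ∀ᶠ l in atTop, (Module.finrank F (ℳ l) : ℤ) =
      ∑ k ∈ Finset.range (Fintype.card σ), e k * (l.choose k : ℤ) := by
  have noetherian : IsNoetherian (MvPolynomial σ F) M := inferInstance
  have top_isHomogeneous : (⊤ : Submodule (MvPolynomial σ F) M).IsHomogeneous ℳ :=
    fun _ _ _ ↦ Submodule.mem_top
  have bot_isHomogeneous : (⊥ : Submodule (MvPolynomial σ F) M).IsHomogeneous ℳ :=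
    fun l x hx ↦ by simp_all
  have finite_pieces (l : ℕ) : FiniteDimensional F (ℳ l) :=
    have := isNoetherian_piece ℳ noetherian l
    inferInstance
  refine ⟨finite_pieces, ?_⟩
  obtain ⟨e, he⟩ := exists_eventually_eq_sum_choose <|
    eventually_fwdDiff_iter_relHilbertFunction_eq_zero ℳ Finset.univ top_isHomogeneous
      bot_isHomogeneous bot_le (by simp)
  refine ⟨e, he.mono fun l hl ↦ ?_⟩
  simpa [relHilbertFunction_top_bot, mul_comm] using hl

/-- **Hilbert polynomial theorem.** Each homogeneous component of a finitely
generated graded `A`-module is finite-dimensional over `F`, and the Hilbert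
function `l ↦ dim_F M_l` agrees for large `l` with
`Σ_{k=0}^{ν} e_k · binomial(l,k)` for some integers `e_0, …, e_ν`. -/
theorem stmt_1 {F : Type} [Field F] {n : ℕ} (hn : 1 ≤ n)
    {M : Type} [AddCommGroup M] [Module F M]
    [Module (MvPolynomial (Fin n) F) M]
    [IsScalarTower F (MvPolynomial (Fin n) F) M]
    (g : PolyGrading F n M) [Module.Finite (MvPolynomial (Fin n) F) M] :
    (∀ l : ℕ, FiniteDimensional F (g.piece l)) ∧
    ∃ (L ν : ℕ) (e : ℕ → ℤ), ∀ l : ℕ, L ≤ l →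
      (Module.finrank F (g.piece l) : ℤ) =
        ∑ k ∈ Finset.range (ν + 1), e k * (l.choose k : ℤ) := by
  let := g.isInternal.chooseDecomposition
  have : SetLike.GradedSMul (homogeneousSubmodule (Fin n) F) g.piece :=
    ⟨fun d l _ _ hp hx ↦ g.smul_mem d l _ hp _ hx⟩
  obtain ⟨finite_pieces, e, he⟩ := stmt_1_general (σ := Fin n) g.piece
  obtain ⟨L, hL⟩ := eventually_atTop.1 he
  refine ⟨finite_pieces, L, n - 1, e, ?_⟩
  simpa [Nat.sub_add_cancel hn] using hL
end

section
/- Let F be an infinite field and M a finitely generated graded A-module. Then there exist a linear form Z ∈ A_1 and a natural number c such that for every l ≥ c the multiplication map Z : M_l → M_{l+1} is injective. In other words, an ordinary element of degree one exists. -/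
open MvPolynomial

/-!
Let `V` be the space of linear forms, so that `A = ∑ V ^ d`. Since `F` is infinite, a generic
`Z ∈ V` lies only in those associated primes of `M` that contain all of `V`. Every associated prime
of `K = ker (Z : M → M)` contains `Z`, hence `V`, so some `V ^ N` annihilates `K`. Being finitely
generated, `K` then lives in bounded degree, and `K ∩ M_l = 0` for large `l`.
-/

theorem exists_mem_forall_le_of_mem {k E : Type*} [DivisionRing k] [Infinite k] [AddCommGroup E]
    [Module k E] (V : Submodule k E) {S : Set (Submodule k E)} (hS : S.Finite) :
    ∃ v ∈ V, ∀ W ∈ S, v ∈ W → V ≤ W := by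
  by_contra! hcover
  let T := {W ∈ S | ¬ V ≤ W}
  have : Finite T := hS.subset (Set.sep_subset _ _)
  have hT : ⋃ W : T, (W.1.comap V.subtype : Set V) = Set.univ := by
    refine Set.eq_univ_of_forall fun ⟨v, hv⟩ ↦ ?_
    obtain ⟨W, hWS, hvW, hVW⟩ := hcover v hv
    exact Set.mem_iUnion.2 ⟨⟨W, hWS, hVW⟩, hvW⟩
  obtain ⟨⟨W, _, hVW⟩, hW⟩ := Subspace.exists_eq_top_of_iUnion_eq_univ hT
  exact hVW (Submodule.comap_subtype_eq_top.1 hW)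

section Annihilator

variable {R M : Type*} [CommRing R] [IsNoetherianRing R] [AddCommGroup M] [Module R M]
  [Module.Finite R M] {I : Ideal R}

theorem exists_pow_le_annihilator_of_le_associatedPrimes (hI : ∀ p ∈ associatedPrimes R M, I ≤ p) :
    ∃ N, I ^ N ≤ Module.annihilator R M := by
  refine Ideal.exists_pow_le_of_le_radical_of_fg ?_ (IsNoetherian.noetherian I)
  rw [← Ideal.sInf_minimalPrimes]
  exact le_sInf fun p hp ↦
    hI p (Module.associatedPrimes.minimalPrimes_annihilator_subset_associatedPrimes R M hp)

theorem exists_pow_le_annihilator_torsionBy {a : R}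
    (hI : ∀ p ∈ associatedPrimes R M, a ∈ p → I ≤ p) :
    ∃ N, I ^ N ≤ Module.annihilator R (Submodule.torsionBy R M a) := by
  refine exists_pow_le_annihilator_of_le_associatedPrimes fun p hp ↦ hI p ?_ ?_
  · exact associatedPrimes.subset_of_injective (Submodule.subtype_injective _) hp
  · refine hp.annihilator_le (Submodule.mem_annihilator.2 fun x _ ↦ ?_)
    exact Submodule.smul_torsionBy a x

end Annihilator

section BoundedDegree

variable {F M : Type*} [CommSemiring F] [AddCommMonoid M] [Module F M] {𝓜 : ℕ → Submodule F M}

theorem exists_span_finset_le_partialSups (h𝓜 : iSup 𝓜 = ⊤) (T : Finset M) :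
    ∃ D, Submodule.span F (T : Set M) ≤ partialSups 𝓜 D := by
  have hdir : Directed (· ≤ ·) (partialSups 𝓜) := (partialSups 𝓜).monotone.directed_le
  have hcover : (T : Set M) ⊆ ⋃ D, (partialSups 𝓜 D : Set M) := by
    rw [← Submodule.coe_iSup_of_directed _ hdir, iSup_partialSups_eq, h𝓜]
    exact Set.subset_univ _
  obtain ⟨D, hD⟩ := Directed.exists_mem_subset_of_finset_subset_biUnion hdir hcover
  exact ⟨D, Submodule.span_le.2 hD⟩

variable {A : Type*} [Semiring A] [Algebra F A] [Module A M] [IsScalarTower F A M]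
  {V : Submodule F A}

theorem smul_partialSups_le (hV𝓜 : ∀ l, V • 𝓜 l ≤ 𝓜 (l + 1)) (D : ℕ) :
    V • partialSups 𝓜 D ≤ partialSups 𝓜 (D + 1) := by
  simp only [partialSups_eq_biSup, Submodule.smul_iSup]
  exact iSup₂_le fun i hi ↦ (hV𝓜 i).trans (le_iSup₂_of_le (i + 1) (Nat.succ_le_succ hi) le_rfl)

theorem pow_smul_partialSups_le (hV𝓜 : ∀ l, V • 𝓜 l ≤ 𝓜 (l + 1)) (d D : ℕ) :
    V ^ d • partialSups 𝓜 D ≤ partialSups 𝓜 (D + d) := by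
  induction d with
  | zero => rw [pow_zero, Submodule.one_smul, add_zero]
  | succ d ih =>
    calc V ^ (d + 1) • partialSups 𝓜 D = V • V ^ d • partialSups 𝓜 D := by
          rw [pow_succ', ← smul_eq_mul, Submodule.smul_assoc]
      _ ≤ V • partialSups 𝓜 (D + d) := Submodule.smul_mono le_rfl ih
      _ ≤ partialSups 𝓜 (D + (d + 1)) := smul_partialSups_le hV𝓜 (D + d)

theorem restrictScalars_span_le_iSup_pow_smul_span (hV : ⨆ d, V ^ d = ⊤) (T : Set M) :
    (Submodule.span A T).restrictScalars F ≤ ⨆ d, V ^ d • Submodule.span F T := by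
  rw [← Submodule.iSup_smul, hV, ← Submodule.span_smul_of_span_eq_top Submodule.span_univ,
    Submodule.span_le]
  rintro _ ⟨a, -, t, ht, rfl⟩
  exact Submodule.smul_mem_smul Submodule.mem_top (Submodule.subset_span ht)

theorem exists_restrictScalars_le_partialSups (hV : ⨆ d, V ^ d = ⊤) (h𝓜 : iSup 𝓜 = ⊤)
    (hV𝓜 : ∀ l, V • 𝓜 l ≤ 𝓜 (l + 1)) {K : Submodule A M} (hK : K.FG) {N : ℕ}
    (hN : V ^ N • K.restrictScalars F = ⊥) :
    ∃ D, K.restrictScalars F ≤ partialSups 𝓜 D := by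
  obtain ⟨T, rfl⟩ := hK
  obtain ⟨D, hD⟩ := exists_span_finset_le_partialSups h𝓜 T
  refine ⟨D + N, (restrictScalars_span_le_iSup_pow_smul_span hV _).trans (iSup_le fun d ↦ ?_)⟩
  rcases le_total d N with hdN | hNd
  · calc V ^ d • Submodule.span F (T : Set M) ≤ V ^ d • partialSups 𝓜 D :=
          Submodule.smul_mono le_rfl hD
      _ ≤ partialSups 𝓜 (D + d) := pow_smul_partialSups_le hV𝓜 d D
      _ ≤ partialSups 𝓜 (D + N) := (partialSups 𝓜).monotone (Nat.add_le_add_left hdN D)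
  · calc V ^ d • Submodule.span F (T : Set M)
        ≤ V ^ d • (Submodule.span A (T : Set M)).restrictScalars F :=
          Submodule.smul_mono le_rfl (Submodule.span_le_restrictScalars F A _)
      _ = V ^ (d - N) • V ^ N • (Submodule.span A (T : Set M)).restrictScalars F := by
          rw [← Submodule.smul_assoc, smul_eq_mul, pow_sub_mul_pow V hNd]
      _ = ⊥ := by rw [hN, Submodule.smul_bot]
      _ ≤ partialSups 𝓜 (D + N) := bot_le

end BoundedDegree

theorem pow_smul_restrictScalars_eq_bot {F A M : Type*} [CommSemiring F] [CommSemiring A]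
    [Algebra F A] [AddCommMonoid M] [Module F M] [Module A M] [IsScalarTower F A M]
    {V : Submodule F A} {K : Submodule A M} {N : ℕ}
    (hN : Ideal.span (V : Set A) ^ N ≤ Module.annihilator A K) :
    V ^ N • K.restrictScalars F = ⊥ := by
  have hVN : V ^ N ≤ (Ideal.span (V : Set A) ^ N).restrictScalars F := by
    rw [Submodule.pow_eq_span_pow_set, Ideal.span, Submodule.span_pow]
    exact Submodule.span_le_restrictScalars F A _
  refine eq_bot_iff.2 (Submodule.smul_le.2 fun a ha x hx ↦ ?_)
  exact Submodule.mem_annihilator.1 (hN (hVN ha)) x hx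

theorem stmt_9_general {F A M : Type*} [Field F] [Infinite F] [CommRing A] [IsNoetherianRing A]
    [Algebra F A] [AddCommGroup M] [Module F M] [Module A M] [IsScalarTower F A M]
    [Module.Finite A M] {V : Submodule F A} (hV : ⨆ d, V ^ d = ⊤) {𝓜 : ℕ → Submodule F M}
    (h𝓜 : DirectSum.IsInternal 𝓜) (hV𝓜 : ∀ l, V • 𝓜 l ≤ 𝓜 (l + 1)) :
    ∃ Z ∈ V, ∃ c, ∀ l, c ≤ l → Set.InjOn (Z • ·) (𝓜 l : Set M) := by
  obtain ⟨Z, hZV, hZ⟩ := exists_mem_forall_le_of_mem V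
    ((associatedPrimes.finite A M).image (Submodule.restrictScalars F))
  let K := Submodule.torsionBy A M Z
  obtain ⟨N, hN⟩ : ∃ N, Ideal.span (V : Set A) ^ N ≤ Module.annihilator A K :=
    exists_pow_le_annihilator_torsionBy fun p hp hZp ↦
      Ideal.span_le.2 (hZ _ (Set.mem_image_of_mem _ hp) hZp)
  obtain ⟨D, hD⟩ := exists_restrictScalars_le_partialSups hV h𝓜.submodule_iSup_eq_top hV𝓜
    (IsNoetherian.noetherian K) (pow_smul_restrictScalars_eq_bot hN)
  refine ⟨Z, hZV, D + 1, fun l hl x hx y hy hxy ↦ ?_⟩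
  have hdisj : Disjoint (𝓜 l) (partialSups 𝓜 D) := by
    rw [partialSups_eq_biSup]
    exact h𝓜.submodule_iSupIndep.disjoint_biSup (y := Set.Iic D) (Nat.not_le.2 hl)
  have hxyK : x - y ∈ K := by
    rw [Submodule.mem_torsionBy_iff, smul_sub, sub_eq_zero]
    exact hxy
  exact sub_eq_zero.1 (Submodule.disjoint_def.1 hdisj _ (sub_mem hx hy) (hD hxyK))

theorem iSup_homogeneousSubmodule_one_pow (σ R : Type*) [CommSemiring R] :
    ⨆ d, homogeneousSubmodule σ R 1 ^ d = ⊤ := by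
  let _ : DirectSum.Decomposition (homogeneousSubmodule σ R) := decomposition
  simp only [homogeneousSubmodule_one_pow]
  exact (DirectSum.Decomposition.isInternal (homogeneousSubmodule σ R)).submodule_iSup_eq_top

theorem PolyGrading.homogeneousSubmodule_one_smul_piece_le {F : Type} [Field F] {n : ℕ} {M : Type}
    [AddCommGroup M] [Module F M] [Module (MvPolynomial (Fin n) F) M]
    [IsScalarTower F (MvPolynomial (Fin n) F) M] (g : PolyGrading F n M) (l : ℕ) :
    homogeneousSubmodule (Fin n) F 1 • g.piece l ≤ g.piece (l + 1) :=
  Submodule.smul_le.2 fun p hp x hx ↦ add_comm 1 l ▸ g.smul_mem 1 l p hp x hx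

/-- Over an infinite field, every finitely generated graded `A`-module admits
an ordinary element of degree one: a linear form `Z ∈ A_1` whose multiplication
map `M_l → M_{l+1}` is injective for all sufficiently large `l`. -/
theorem stmt_9 {F : Type} [Field F] [Infinite F] {n : ℕ} (hn : 1 ≤ n)
    {M : Type} [AddCommGroup M] [Module F M]
    [Module (MvPolynomial (Fin n) F) M]
    [IsScalarTower F (MvPolynomial (Fin n) F) M]
    (g : PolyGrading F n M) [Module.Finite (MvPolynomial (Fin n) F) M] :
    ∃ Z : MvPolynomial (Fin n) F, Z.IsHomogeneous 1 ∧
      ∃ c : ℕ, ∀ l : ℕ, c ≤ l →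
        ∀ x ∈ g.piece l, ∀ y ∈ g.piece l, Z • x = Z • y → x = y := by
  obtain ⟨Z, hZ, c, hc⟩ := stmt_9_general (iSup_homogeneousSubmodule_one_pow (Fin n) F)
    g.isInternal g.homogeneousSubmodule_one_smul_piece_le
  exact ⟨Z, hZ, c, fun l hl x hx y hy hxy ↦ hc l hl hx hy hxy⟩
end

section
/- Let F be an infinite field and M a finitely generated graded A-module. Then there exists an F-basis Z₁,…,Zₙ of the space A_1 of linear forms which is ordinary for M: for every i ∈ {0,…,n−1}, writing M(i) = M/(Z₁,…,Z_i)M for the graded quotient of M by the submodule generated by Z₁·M, …, Z_i·M, the multiplication map Z_{i+1} : M(i)_l → M(i)_{l+1} is injective for all sufficiently large l. -/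
open MvPolynomial

/-!
Let `𝔪` be the ideal generated by the variables. If a linear form `z` avoids every associated prime
of `M ⧸ N` that does not contain `𝔪`, then every associated prime of the kernel of `z` on `M ⧸ N`
contains `𝔪`, so a power of `𝔪` kills that kernel, and by Artin–Rees the kernel meets
`𝔪 ^ c (M ⧸ N)` trivially for large `c`. Since `M_l ⊆ 𝔪 ^ c M` for large `l`, multiplication
by `z` is injective modulo `N` in high degrees. The linear forms lying in one of the finitely many
bad primes, or in the span of the forms already chosen, make up finitely many proper subspaces,
which cannot cover `A_1` over an infinite field; so the basis can be chosen greedily.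
-/

section LinearAlgebra

theorem exists_forall_mem_imp_eq_top {K E : Type*} [DivisionRing K] [Infinite K] [AddCommGroup E]
    [Module K E] {S : Set (Submodule K E)} (hS : S.Finite) :
    ∃ v : E, ∀ W ∈ S, v ∈ W → W = ⊤ := by
  by_contra! hcover
  have hS' : (S \ {⊤}).Finite := hS.sdiff
  refine Subspace.biUnion_ne_univ_of_top_notMem (s := hS'.toFinset) (by simp) ?_
  refine Set.eq_univ_of_forall fun v => ?_
  obtain ⟨W, hWS, hvW, hW⟩ := hcover v
  exact Set.mem_biUnion (hS'.mem_toFinset.2 ⟨hWS, hW⟩) hvW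

variable {K V : Type*} [DivisionRing K] [AddCommGroup V] [Module K V]
  {R : Set V → V → Prop}

theorem exists_linearIndependent_forall_image_Iio {k : ℕ} (hk : k ≤ Module.finrank K V)
    (hR : ∀ s : Set V, Submodule.span K s ≠ ⊤ → ∃ v ∉ Submodule.span K s, R s v) :
    ∃ v : Fin k → V, LinearIndependent K v ∧ ∀ i, R (v '' Set.Iio i) (v i) := by
  induction k with
  | zero => exact ⟨![], linearIndependent_empty_type, fun i => i.elim0⟩
  | succ k ih =>
    obtain ⟨v, hv, hRv⟩ := ih (by omega)
    have hspan : Submodule.span K (Set.range v) ≠ ⊤ := fun htop => by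
      have hcard := finrank_span_eq_card hv
      rw [htop, finrank_top, Fintype.card_fin] at hcard
      omega
    obtain ⟨w, hw, hRw⟩ := hR _ hspan
    refine ⟨Fin.snoc v w, hv.finSnoc hw, Fin.lastCases ?_ fun i => ?_⟩
    · have hIio : Set.Iio (Fin.last k) = Set.range Fin.castSucc := Fin.range_castSucc.symm
      rwa [Fin.snoc_last, hIio, ← Set.range_comp, Fin.snoc_comp_castSucc]
    · rw [Fin.snoc_castSucc, ← Fin.image_castSucc_Iio, ← Set.image_comp, Fin.snoc_comp_castSucc]
      exact hRv i

theorem exists_basis_forall_image_Iio [FiniteDimensional K V] {n : ℕ}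
    (hn : Module.finrank K V = n)
    (hR : ∀ s : Set V, Submodule.span K s ≠ ⊤ → ∃ v ∉ Submodule.span K s, R s v) :
    ∃ b : Module.Basis (Fin n) K V, ∀ i, R (b '' Set.Iio i) (b i) := by
  obtain ⟨v, hv, hRv⟩ := exists_linearIndependent_forall_image_Iio hn.ge hR
  have hspan := hv.span_eq_top_of_card_eq_finrank' (by rw [Fintype.card_fin, hn])
  exact ⟨.mk hv hspan.ge, by simpa only [Module.Basis.coe_mk] using hRv⟩

end LinearAlgebra

section AssociatedPrimes

variable {A M : Type*} [CommRing A] [IsNoetherianRing A] [AddCommGroup M] [Module A M]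
  [Module.Finite A M] {I : Ideal A}

theorem le_radical_annihilator_of_forall_associatedPrimes
    (hI : ∀ P ∈ associatedPrimes A M, I ≤ P) : I ≤ (Module.annihilator A M).radical := by
  rw [← Ideal.sInf_minimalPrimes]
  exact le_sInf fun P hP =>
    hI P (Module.associatedPrimes.minimalPrimes_annihilator_subset_associatedPrimes A M hP)

theorem exists_disjoint_pow_smul_top {K : Submodule A M}
    (hI : I ≤ (Module.annihilator A K).radical) :
    ∃ c : ℕ, Disjoint (I ^ c • (⊤ : Submodule A M)) K := by
  obtain ⟨k, hk⟩ := Ideal.exists_pow_le_of_le_radical_of_fg hI (IsNoetherian.noetherian I)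
  obtain ⟨e, he⟩ := Ideal.exists_pow_inf_eq_pow_smul I K
  refine ⟨k + e, disjoint_iff_inf_le.2 ?_⟩
  calc I ^ (k + e) • (⊤ : Submodule A M) ⊓ K
      = I ^ k • (I ^ e • ⊤ ⊓ K) := by rw [he (k + e) (by omega), Nat.add_sub_cancel]
    _ ≤ K.annihilator • K := Submodule.smul_mono hk inf_le_right
    _ = ⊥ := Submodule.annihilator_smul K

theorem exists_disjoint_pow_smul_top_ker_lsmul {z : A}
    (hz : ∀ P ∈ associatedPrimes A M, z ∈ P → I ≤ P) :
    ∃ c : ℕ, Disjoint (I ^ c • (⊤ : Submodule A M)) (LinearMap.ker (LinearMap.lsmul A M z)) := by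
  set K := LinearMap.ker (LinearMap.lsmul A M z)
  have hzK : z ∈ (⊤ : Submodule A K).annihilator :=
    Submodule.mem_annihilator.2 fun x _ => Subtype.ext x.2
  refine exists_disjoint_pow_smul_top (le_radical_annihilator_of_forall_associatedPrimes ?_)
  exact fun P hP => hz P (associatedPrimes.subset_of_injective K.injective_subtype hP)
    (hP.annihilator_le hzK)

end AssociatedPrimes

section LinearForms

variable {σ : Type*}

instance finite_homogeneousSubmodule_one {R : Type*} [CommSemiring R] [Finite σ] :
    Module.Finite R (homogeneousSubmodule σ R 1) := by
  rw [homogeneousSubmodule_one_eq_span_X]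
  exact Module.Finite.span_of_finite R (Set.finite_range X)

theorem finrank_homogeneousSubmodule_one {R : Type*} [CommRing R] [Nontrivial R] [Fintype σ] :
    Module.finrank R (homogeneousSubmodule σ R 1) = Fintype.card σ := by
  rw [homogeneousSubmodule_one_eq_span_X, finrank_span_eq_card (linearIndependent_X σ R)]

theorem idealOfVars_le_of_homogeneousSubmodule_one_le {R : Type*} [CommSemiring R]
    {P : Ideal (MvPolynomial σ R)} (hP : homogeneousSubmodule σ R 1 ≤ P.restrictScalars R) :
    idealOfVars σ R ≤ P :=
  Ideal.span_le.2 <| Set.range_subset_iff.2 fun i => hP (isHomogeneous_X R i)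

theorem exists_linearForm_notMem {F : Type*} [Field F] [Infinite F]
    {W : Submodule F (homogeneousSubmodule σ F 1)} (hW : W ≠ ⊤)
    {T : Set (Ideal (MvPolynomial σ F))} (hT : T.Finite) :
    ∃ z ∉ W, ∀ P ∈ T, (z : MvPolynomial σ F) ∈ P → idealOfVars σ F ≤ P := by
  let formsIn (P : Ideal (MvPolynomial σ F)) : Submodule F (homogeneousSubmodule σ F 1) :=
    (P.restrictScalars F).comap (homogeneousSubmodule σ F 1).subtype
  obtain ⟨z, hz⟩ := exists_forall_mem_imp_eq_top ((hT.image formsIn).insert W)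
  refine ⟨z, fun hzW => hW (hz W (Set.mem_insert _ _) hzW), fun P hP hzP => ?_⟩
  have htop := hz (formsIn P) (Set.mem_insert_of_mem _ (Set.mem_image_of_mem _ hP)) hzP
  exact idealOfVars_le_of_homogeneousSubmodule_one_le (Submodule.comap_subtype_eq_top.1 htop)

end LinearForms

namespace PolyGrading

variable {F : Type} [Field F] {n : ℕ} {M : Type} [AddCommGroup M] [Module F M]
  [Module (MvPolynomial (Fin n) F) M] [IsScalarTower F (MvPolynomial (Fin n) F) M]
  (g : PolyGrading F n M)

/-- `PolyGrading` only asserts that the decomposition exists; this chooses the component maps. -/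
noncomputable instance decomposition : DirectSum.Decomposition g.piece :=
  g.isInternal.chooseDecomposition

theorem exists_span_piece_eq_top [Module.Finite (MvPolynomial (Fin n) F) M] :
    ∃ D : ℕ, Submodule.span (MvPolynomial (Fin n) F) (⋃ j ≤ D, (g.piece j : Set M)) = ⊤ := by
  classical
  let N : ℕ →o Submodule (MvPolynomial (Fin n) F) M :=
    { toFun D := Submodule.span _ (⋃ j ≤ D, (g.piece j : Set M))
      monotone' _ _ h :=
        Submodule.span_mono (Set.biUnion_subset_biUnion_left fun _ hj => le_trans hj h) }
  have hN : ⨆ D, N D = ⊤ := by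
    refine eq_top_iff.2 fun x _ => ?_
    rw [← DirectSum.sum_support_decompose g.piece x]
    refine Submodule.sum_mem _ fun j _ => Submodule.mem_iSup_of_mem j (Submodule.subset_span ?_)
    exact Set.mem_iUnion₂_of_mem le_rfl (SetLike.coe_mem _)
  obtain ⟨D, hD⟩ := Module.Finite.fg_top.stabilizes_of_iSup_eq N hN
  exact ⟨D, hD.symm⟩

variable {g} in
theorem decompose_smul_mem_pow_idealOfVars_smul_top {c j l : ℕ} (hl : j + c ≤ l) {y : M}
    (hy : y ∈ g.piece j) (p : MvPolynomial (Fin n) F) :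
    (DirectSum.decompose g.piece (p • y) l : M) ∈
      idealOfVars (Fin n) F ^ c • (⊤ : Submodule (MvPolynomial (Fin n) F) M) := by
  induction p using MvPolynomial.induction_on' with
  | add p q hp hq =>
    rw [add_smul, DirectSum.decompose_add]
    exact Submodule.add_mem _ hp hq
  | monomial d a =>
    have hdy := g.smul_mem d.degree j (monomial d a) (isHomogeneous_monomial a rfl) y hy
    by_cases hdl : d.degree + j = l
    · have hd : monomial d a ∈ idealOfVars (Fin n) F ^ c :=
        (mem_pow_idealOfVars_iff c _).2 fun e he => by
          rw [Finset.mem_singleton.1 (support_monomial_subset he)]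
          omega
      rw [← hdl, DirectSum.decompose_of_mem_same _ hdy]
      exact Submodule.smul_mem_smul hd trivial
    · rw [DirectSum.decompose_of_mem_ne _ hdy hdl]
      exact Submodule.zero_mem _

theorem exists_forall_mem_pow_idealOfVars_smul_top [Module.Finite (MvPolynomial (Fin n) F) M]
    (c : ℕ) : ∃ B : ℕ, ∀ l, B ≤ l → ∀ x ∈ g.piece l,
      x ∈ idealOfVars (Fin n) F ^ c • (⊤ : Submodule (MvPolynomial (Fin n) F) M) := by
  obtain ⟨D, hD⟩ := g.exists_span_piece_eq_top
  refine ⟨D + c, fun l hl x hx => ?_⟩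
  suffices hcomp : ∀ w : M, (DirectSum.decompose g.piece w l : M) ∈
      idealOfVars (Fin n) F ^ c • (⊤ : Submodule (MvPolynomial (Fin n) F) M) by
    simpa only [DirectSum.decompose_of_mem_same _ hx] using hcomp x
  intro w
  have hw : w ∈ Submodule.span (MvPolynomial (Fin n) F) (⋃ j ≤ D, (g.piece j : Set M)) :=
    hD ▸ Submodule.mem_top
  induction hw using Submodule.closure_induction with
  | zero =>
    rw [DirectSum.decompose_zero]
    exact Submodule.zero_mem _
  | add u v _ _ hu hv =>
    rw [DirectSum.decompose_add]
    exact Submodule.add_mem _ hu hv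
  | smul_mem p y hy =>
    obtain ⟨j, hj, hyj⟩ := Set.mem_iUnion₂.1 hy
    exact decompose_smul_mem_pow_idealOfVars_smul_top (by omega) hyj p

/-- Multiplication by `z` is injective on `M ⧸ N` in all large degrees. The degree-`l` part of
`M ⧸ N` is represented by the elements of `g.piece l`, so that the quotient needs no
grading of its own. -/
def IsEventuallyRegular (N : Submodule (MvPolynomial (Fin n) F) M)
    (z : MvPolynomial (Fin n) F) : Prop :=
  ∃ c : ℕ, ∀ l : ℕ, c ≤ l → ∀ x ∈ g.piece l, z • x ∈ N → x ∈ N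

variable [Module.Finite (MvPolynomial (Fin n) F) M] (N : Submodule (MvPolynomial (Fin n) F) M)

variable {N} in
theorem isEventuallyRegular_of_forall_associatedPrimes {z : MvPolynomial (Fin n) F}
    (hz : ∀ P ∈ associatedPrimes (MvPolynomial (Fin n) F) (M ⧸ N),
      z ∈ P → idealOfVars (Fin n) F ≤ P) :
    g.IsEventuallyRegular N z := by
  obtain ⟨c, hc⟩ := exists_disjoint_pow_smul_top_ker_lsmul hz
  obtain ⟨B, hB⟩ := g.exists_forall_mem_pow_idealOfVars_smul_top c
  refine ⟨B, fun l hl x hx hzx => ?_⟩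
  have hx_pow : N.mkQ x ∈
      idealOfVars (Fin n) F ^ c • (⊤ : Submodule (MvPolynomial (Fin n) F) (M ⧸ N)) := by
    have hx_map := Submodule.mem_map_of_mem (f := N.mkQ) (hB l hl x hx)
    rwa [Submodule.map_smul'', Submodule.map_top, Submodule.range_mkQ] at hx_map
  have hx_ker : N.mkQ x ∈
      LinearMap.ker (LinearMap.lsmul (MvPolynomial (Fin n) F) (M ⧸ N) z) :=
    (Submodule.Quotient.mk_eq_zero N).2 hzx
  exact (Submodule.Quotient.mk_eq_zero N).1 (Submodule.disjoint_def.1 hc _ hx_pow hx_ker)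

theorem exists_linearForm_isEventuallyRegular [Infinite F]
    {W : Submodule F (homogeneousSubmodule (Fin n) F 1)} (hW : W ≠ ⊤) :
    ∃ z ∉ W, g.IsEventuallyRegular N z := by
  obtain ⟨z, hzW, hz⟩ := exists_linearForm_notMem hW
    (associatedPrimes.finite (MvPolynomial (Fin n) F) (M ⧸ N))
  exact ⟨z, hzW, g.isEventuallyRegular_of_forall_associatedPrimes hz⟩

end PolyGrading

/-- **Existence of an ordinary basis.** Over an infinite field `F`, for every
finitely generated graded `A`-module `M` there is an `F`-basis `Z₀, …, Z_{n-1}`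
of the space `A_1` of linear forms such that for each `i`, multiplication by
`Z_i` on the graded quotient `M(i) = M/(Z₀,…,Z_{i-1})M` is injective in every
sufficiently large degree: `Z_i • x ∈ (Z₀,…,Z_{i-1})M → x ∈ (Z₀,…,Z_{i-1})M`
for all `x ∈ M_l`, `l` large. -/
theorem stmt_10 {F : Type} [Field F] [Infinite F] {n : ℕ} (hn : 1 ≤ n)
    {M : Type} [AddCommGroup M] [Module F M]
    [Module (MvPolynomial (Fin n) F) M]
    [IsScalarTower F (MvPolynomial (Fin n) F) M]
    (g : PolyGrading F n M) [Module.Finite (MvPolynomial (Fin n) F) M] :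
    ∃ Z : Fin n → MvPolynomial (Fin n) F,
      (∀ i, (Z i).IsHomogeneous 1) ∧
      LinearIndependent F Z ∧
      (∀ p : MvPolynomial (Fin n) F, p.IsHomogeneous 1 →
        p ∈ Submodule.span F (Set.range Z)) ∧
      ∀ i : Fin n, ∃ c : ℕ, ∀ l : ℕ, c ≤ l → ∀ x ∈ g.piece l,
        Z i • x ∈
          (Ideal.span (Z '' {j : Fin n | j < i})) • (⊤ : Submodule (MvPolynomial (Fin n) F) M) →
        x ∈
          (Ideal.span (Z '' {j : Fin n | j < i})) • (⊤ : Submodule (MvPolynomial (Fin n) F) M) := by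
  let A₁ := homogeneousSubmodule (Fin n) F 1
  obtain ⟨b, hb⟩ := exists_basis_forall_image_Iio
    (finrank_homogeneousSubmodule_one.trans (Fintype.card_fin n))
    (R := fun s z => g.IsEventuallyRegular (Ideal.span (A₁.subtype '' s) • ⊤) z)
    fun _ hs => g.exists_linearForm_isEventuallyRegular _ hs
  refine ⟨A₁.subtype ∘ b, fun i => (b i).2, b.linearIndependent.map' _ A₁.ker_subtype, ?_, ?_⟩
  · intro p hp
    have hspan : Submodule.span F (Set.range (A₁.subtype ∘ b)) = A₁ := by
      rw [Set.range_comp, Submodule.span_image, b.span_eq, Submodule.map_subtype_top]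
    exact hspan.ge hp
  · intro i
    rw [Set.image_comp]
    exact hb i
end
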